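/- Exponential concentration of the signed occurrence profile: fix a positive rational c, set λ = 3c, and let n range over positive integers with c·n ∈ ℕ. Fix integers 0 ≤ p ≤ x and a real ε > 0. Then there exist constants C > 0 and δ > 0 such that for every such n, the probability that a uniformly random formula F : Fin (c·n) → (Fin n × Bool)³ satisfies |ω_{x,p}(F) − κ_{x,p}| ≥ ε is at most C·√n·e^{−δ·n}. -/

import Mathlib

open Filter

/-- `κ_{x,p} = 2^{-x} (x choose p) e^{-λ} λ^x / x!`. -/
noncomputable def kappa (lam : ℝ) (x p : ℕ) : ℝ :=
  (2 : ℝ) ^ (-(x : ℝ)) * (Nat.choose x p : ℝ) *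
    (Real.exp (-lam) * lam ^ x / (Nat.factorial x : ℝ))

/-- Number of occurrences of the variable `v` in the formula `F`. -/
noncomputable def numOccs {n m : ℕ} (F : Fin m → Fin 3 → Fin n × Bool) (v : Fin n) : ℕ :=
  Nat.card {ij : Fin m × Fin 3 // (F ij.1 ij.2).1 = v}

/-- Number of positive occurrences of the variable `v` in the formula `F`. -/
noncomputable def numPosOccs {n m : ℕ} (F : Fin m → Fin 3 → Fin n × Bool) (v : Fin n) : ℕ :=
  Nat.card {ij : Fin m × Fin 3 // F ij.1 ij.2 = (v, true)}

/-- `ω_{x,p}(F)`: the proportion (among the `n` variables) of variables having `x`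
occurrences in `F`, `p` of them positive. -/
noncomputable def omegaProp (n m x p : ℕ) (F : Fin m → Fin 3 → Fin n × Bool) : ℝ :=
  (Nat.card {v : Fin n // numOccs F v = x ∧ numPosOccs F v = p} : ℝ) / (n : ℝ)

/-!
The literals of a uniform formula are `N = 3m` independent balls thrown into the `2n` cells
`(v, b)`, so the vector of cell counts is multinomial: it is a vector of independent Poisson
variables of rate `r = N / (2n)`, conditioned on having sum `N`. That sum has probability
`N ^ N * exp (-N) / N!`, so dropping the conditioning costs a factor at most `e * √N`
(Stirling), whence the `√n` in the bound. Without the conditioning the variables of the formula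
become independent, each having `p` positive and `x - p` negative occurrences with probability
exactly `κ_{x,p}`, and Hoeffding's inequality bounds the deviation of their frequency.
-/

open Finset MeasureTheory ProbabilityTheory
open scoped NNReal Nat

lemma factorial_le_exp_mul_sqrt_mul_pow {n : ℕ} (hn : n ≠ 0) :
    (n ! : ℝ) ≤ Real.exp 1 * √n * (n / Real.exp 1) ^ n := by
  obtain ⟨k, rfl⟩ := Nat.exists_eq_succ_of_ne_zero hn
  have h : Stirling.stirlingSeq (k + 1) ≤ Real.exp 1 / √2 :=
    Stirling.stirlingSeq_one ▸ Stirling.stirlingSeq'_antitone k.zero_le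
  rw [Stirling.stirlingSeq, div_le_iff₀ (by positivity), Real.sqrt_mul zero_le_two] at h
  refine h.trans_eq ?_
  field_simp

section Occupancy

variable {ι α : Type*} [Fintype ι] [DecidableEq α]

/-- The occupancy vector of an assignment `G` of balls `ι` to cells `α`: the number of balls in
each cell. A formula is such an assignment of literals to the literal positions. -/
def occupancy (G : ι → α) (a : α) : ℕ := #{i | G i = a}

variable [Fintype α]

lemma sum_occupancy (G : ι → α) : ∑ a, occupancy G a = Fintype.card ι :=
  (card_eq_sum_card_fiberwise fun _ _ ↦ mem_univ _).symm

lemma prod_pow_occupancy {M : Type*} [CommMonoid M] (f : α → M) (G : ι → α) :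
    ∏ a, f a ^ occupancy G a = ∏ i, f (G i) := by
  simp only [occupancy, ← prod_const, prod_fiberwise']

lemma card_occupancy_eq_multinomial [DecidableEq ι] {k : α → ℕ}
    (hk : ∑ a, k a = Fintype.card ι) :
    #{G : ι → α | occupancy G = k} = Nat.multinomial univ k := by
  set d : α →₀ ℕ := Finsupp.equivFunOnFinite.symm k with hd
  have sum_pow_eq : (∑ a, MvPolynomial.X a : MvPolynomial α ℕ) ^ Fintype.card ι =
      ∑ G : ι → α, ∏ a, MvPolynomial.X a ^ occupancy G a := by
    simp only [prod_pow_occupancy, ← card_univ, ← prod_const, prod_univ_sum,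
      Fintype.piFinset_univ]
  calc #{G : ι → α | occupancy G = k}
      = (∑ G : ι → α, ∏ a, (MvPolynomial.X a : MvPolynomial α ℕ) ^ occupancy G a).coeff d := by
        simp only [MvPolynomial.coeff_sum, MvPolynomial.coeff_prod_X_pow, card_filter]
        refine sum_congr rfl fun G _ ↦ if_congr ?_ rfl rfl
        simp [hd, Finsupp.ext_iff, funext_iff, eq_comm]
    _ = d.multinomial := by
        rw [← sum_pow_eq]
        simpa [hd, Finsupp.sum_fintype, hk] using
          MvPolynomial.coeff_linearCombination_X_pow_of_fintype (R := ℕ) (fun _ ↦ 1) d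
            (Fintype.card ι)
    _ = Nat.multinomial univ k :=
        (Finsupp.multinomial_of_support_subset (subset_univ _)).symm

end Occupancy

section Poissonization

variable {ι α : Type*} [Fintype ι] [Fintype α]

lemma pi_poissonMeasure_real_singleton (r : ℝ≥0) (k : α → ℕ) :
    (Measure.pi fun _ : α ↦ poissonMeasure r).real {k} =
      Real.exp (-(r * Fintype.card α)) * r ^ (∑ a, k a) / ∏ a, ((k a)! : ℝ) := by
  rw [measureReal_def, Measure.pi_singleton, ENNReal.toReal_prod]
  simp only [← measureReal_def, poissonMeasure_real_singleton, prod_div_distrib, prod_mul_distrib,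
    prod_const, card_univ, prod_pow_eq_pow_sum, ← Real.exp_nat_mul]
  ring_nf

variable [DecidableEq α]

lemma card_occupancy_eq_poisson [DecidableEq ι] {r : ℝ≥0} (hr : r ≠ 0) {k : α → ℕ}
    (hk : ∑ a, k a = Fintype.card ι) :
    (#{G : ι → α | occupancy G = k} : ℝ) =
      (Fintype.card ι)! * Real.exp (r * Fintype.card α) / r ^ Fintype.card ι *
        (Measure.pi fun _ : α ↦ poissonMeasure r).real {k} := by
  have hspec : (∏ a, ((k a)! : ℝ)) * Nat.multinomial univ k = (Fintype.card ι)! := by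
    exact_mod_cast hk ▸ Nat.multinomial_spec univ k
  have hfac : ∏ a, ((k a)! : ℝ) ≠ 0 := prod_ne_zero_iff.2 fun a _ ↦ by positivity
  rw [card_occupancy_eq_multinomial hk, pi_poissonMeasure_real_singleton, hk, ← hspec,
    Real.exp_neg]
  field_simp

lemma card_occupancy_mem_le [DecidableEq ι] {r : ℝ≥0} (hr : r ≠ 0) (A : Set (α → ℕ))
    [DecidablePred (· ∈ A)] :
    (#{G : ι → α | occupancy G ∈ A} : ℝ) ≤
      (Fintype.card ι)! * Real.exp (r * Fintype.card α) / r ^ Fintype.card ι *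
        (Measure.pi fun _ : α ↦ poissonMeasure r).real A := by
  set S : Finset (α → ℕ) := {k ∈ piAntidiag univ (Fintype.card ι) | k ∈ A} with hS
  have hmaps : ∀ G ∈ ({G : ι → α | occupancy G ∈ A} : Finset (ι → α)), occupancy G ∈ S := by
    intro G hG
    simpa [hS, sum_occupancy] using hG
  have hfib : ∀ k ∈ S, #{G ∈ ({G : ι → α | occupancy G ∈ A} : Finset (ι → α)) | occupancy G = k} =
      #{G : ι → α | occupancy G = k} := by
    intro k hk
    congr 1
    ext G
    simp only [hS, mem_filter, mem_univ, true_and, and_iff_right_iff_imp] at hk ⊢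
    rintro rfl
    exact hk.2
  rw [card_eq_sum_card_fiberwise hmaps, sum_congr rfl hfib, Nat.cast_sum,
    sum_congr rfl fun k hk ↦ card_occupancy_eq_poisson hr
      (mem_piAntidiag.1 (mem_filter.1 hk).1).1, ← mul_sum, sum_measureReal_singleton]
  gcongr
  · finiteness
  · intro k hk
    exact (mem_filter.1 hk).2

lemma card_occupancy_mem_div_le [Nonempty ι] {r : ℝ≥0}
    (hr : r * Fintype.card α = (Fintype.card ι : ℝ)) (A : Set (α → ℕ)) :
    (Nat.card {G : ι → α // occupancy G ∈ A} : ℝ) / Fintype.card α ^ Fintype.card ι ≤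
      Real.exp 1 * √(Fintype.card ι) * (Measure.pi fun _ : α ↦ poissonMeasure r).real A := by
  classical
  set N := Fintype.card ι
  have hN0 : N ≠ 0 := Fintype.card_ne_zero
  have hr0 : r ≠ 0 := by
    rintro rfl
    exact hN0 (by simpa [eq_comm] using hr)
  have hα : 0 < (Fintype.card α : ℝ) := pos_of_mul_pos_right
    (hr ▸ Nat.cast_pos.2 (Nat.pos_of_ne_zero hN0)) r.coe_nonneg
  have conditioning_cost : (N ! : ℝ) * Real.exp N / (r * Fintype.card α) ^ N ≤
      Real.exp 1 * √N := by
    rw [hr, div_le_iff₀ (by positivity), ← Real.exp_one_pow, ← le_div_iff₀ (by positivity),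
      mul_div_assoc, ← div_pow]
    exact factorial_le_exp_mul_sqrt_mul_pow hN0
  rw [Nat.card_eq_fintype_card, Fintype.card_subtype, div_le_iff₀ (by positivity)]
  calc (#{G : ι → α | occupancy G ∈ A} : ℝ)
      ≤ N ! * Real.exp N / r ^ N * (Measure.pi fun _ : α ↦ poissonMeasure r).real A := by
        simpa only [hr] using card_occupancy_mem_le hr0 A
    _ = N ! * Real.exp N / (r * Fintype.card α) ^ N *
          (Measure.pi fun _ : α ↦ poissonMeasure r).real A * Fintype.card α ^ N := by
        rw [mul_pow]
        field_simp
    _ ≤ _ := by gcongr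

end Poissonization

section Hoeffding

variable {V : Type*}

lemma measureReal_abs_sum_sub_integral_ge_le {Ω : Type*} {mΩ : MeasurableSpace Ω} {μ : Measure Ω}
    [IsProbabilityMeasure μ] {X : V → Ω → ℝ} {s : Finset V} (hindep : iIndepFun X μ)
    (hX : ∀ v ∈ s, AEMeasurable (X v) μ) {a b : V → ℝ}
    (hab : ∀ v ∈ s, ∀ᵐ ω ∂μ, X v ω ∈ Set.Icc (a v) (b v)) {ε : ℝ} (hε : 0 ≤ ε) :
    μ.real {ω | ε ≤ |∑ v ∈ s, (X v ω - μ[X v])|} ≤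
      2 * Real.exp (-2 * ε ^ 2 / ∑ v ∈ s, (b v - a v) ^ 2) := by
  have hcentered : iIndepFun (fun v ω ↦ X v ω - μ[X v]) μ :=
    hindep.comp (fun v y ↦ y - ∫ ω, X v ω ∂μ) fun _ ↦ by fun_prop
  have hsub : HasSubgaussianMGF (fun ω ↦ ∑ v ∈ s, (X v ω - μ[X v]))
      (∑ v ∈ s, (‖b v - a v‖₊ / 2) ^ 2) μ :=
    .sum_of_iIndepFun hcentered fun v hv ↦ hasSubgaussianMGF_of_mem_Icc (hX v hv) (hab v hv)
  have hexp : -ε ^ 2 / (2 * (∑ v ∈ s, (‖b v - a v‖₊ / 2) ^ 2 : ℝ≥0)) =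
      -2 * ε ^ 2 / ∑ v ∈ s, (b v - a v) ^ 2 := by
    simp only [NNReal.coe_sum, NNReal.coe_pow, NNReal.coe_div, coe_nnnorm, Real.norm_eq_abs,
      NNReal.coe_ofNat, div_pow, sq_abs, ← sum_div]
    field_simp
  calc μ.real {ω | ε ≤ |∑ v ∈ s, (X v ω - μ[X v])|}
      = μ.real ({ω | ε ≤ ∑ v ∈ s, (X v ω - μ[X v])} ∪
          {ω | ε ≤ -∑ v ∈ s, (X v ω - μ[X v])}) := by
        simp only [le_abs, Set.ofPred_or]
    _ ≤ _ := measureReal_union_le _ _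
    _ ≤ _ := add_le_add (hsub.measure_ge_le hε) (hsub.neg.measure_ge_le hε)
    _ = _ := by rw [hexp, two_mul]

lemma pi_abs_frequency_sub_ge_le [Fintype V] [Nonempty V] {Y : Type*} [MeasurableSpace Y]
    (ν : Measure Y) [IsProbabilityMeasure ν] {S : Set Y} (hS : MeasurableSet S)
    [DecidablePred (· ∈ S)] {ε : ℝ} (hε : 0 ≤ ε) :
    (Measure.pi fun _ : V ↦ ν).real
        {ω | ε ≤ |(#{v | ω v ∈ S} : ℝ) / Fintype.card V - ν.real S|} ≤
      2 * Real.exp (-2 * ε ^ 2 * Fintype.card V) := by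
  set f : Y → ℝ := S.indicator 1 with hf
  have hfm : Measurable f := measurable_one.indicator hS
  have hmem (y : Y) : f y ∈ Set.Icc (0 : ℝ) 1 :=
    ⟨S.indicator_nonneg (fun _ _ ↦ zero_le_one) y, S.indicator_le_self' (by simp) y⟩
  have hmean (v : V) : ∫ ω, f (ω v) ∂Measure.pi (fun _ : V ↦ ν) = ν.real S := by
    rw [integral_comp_eval hfm.aestronglyMeasurable, hf, integral_indicator_one hS]
  have hfreq (ω : V → Y) : ∑ v, (f (ω v) - ν.real S) =
      Fintype.card V * ((#{v | ω v ∈ S} : ℝ) / Fintype.card V - ν.real S) := by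
    have : ∑ v, f (ω v) = #{v | ω v ∈ S} := by simp [hf, Set.indicator_apply]
    rw [sum_sub_distrib, this, sum_const, card_univ, nsmul_eq_mul]
    field_simp
  have hscaled := measureReal_abs_sum_sub_integral_ge_le (s := univ)
    (iIndepFun_pi (μ := fun _ : V ↦ ν) fun _ ↦ hfm.aemeasurable)
    (fun v _ ↦ (hfm.comp (measurable_pi_apply v)).aemeasurable)
    (fun v _ ↦ ae_of_all _ fun ω ↦ hmem (ω v)) (mul_nonneg (Fintype.card V).cast_nonneg hε)
  simp only [hmean, hfreq, abs_mul, Nat.abs_cast, sub_zero, one_pow, sum_const, card_univ,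
    nsmul_eq_mul, mul_one] at hscaled
  convert hscaled using 4
  · exact (mul_le_mul_iff_right₀ (by positivity)).symm
  · field_simp

end Hoeffding

section Curry

variable {V κ X : Type*} [Fintype V] [Fintype κ] [MeasurableSpace X]

lemma measurePreserving_curry_pi (μ : V → κ → Measure X) [∀ v b, IsProbabilityMeasure (μ v b)] :
    MeasurePreserving (MeasurableEquiv.curry V κ X) (Measure.pi fun p : V × κ ↦ μ p.1 p.2)
      (Measure.pi fun v ↦ Measure.pi (μ v)) where
  measurable := (MeasurableEquiv.curry V κ X).measurable
  map_eq := by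
    simpa only [Measure.infinitePi_eq_pi] using Measure.infinitePi_map_curry μ

end Curry

section Formula

variable {n m : ℕ}

/-- The numbers of positive (`true`) and negative (`false`) occurrences of a variable with `x`
occurrences, `p` of them positive. The subtraction truncates, so this is meaningful for
`p ≤ x` only. -/
def signCounts (x p : ℕ) (b : Bool) : ℕ := if b then p else x - p

/-- The occurrence counts `k (v, b)` of the literals on the variables `V` for which the frequency
of variables with `x` occurrences, `p` of them positive, is at distance at least `ε` from
`κ_{x,p}`. -/
def atypicalCounts (V : Type*) [Fintype V] (lam : ℝ) (x p : ℕ) (ε : ℝ) : Set (V × Bool → ℕ) :=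
  {k | ε ≤ |(#{v | Function.curry k v = signCounts x p} : ℝ) / Fintype.card V - kappa lam x p|}

lemma numPosOccs_eq_occupancy (F : Fin m → Fin 3 → Fin n × Bool) (v : Fin n) :
    numPosOccs F v = occupancy (Function.uncurry F) (v, true) := by
  rw [numPosOccs, Nat.card_eq_fintype_card, Fintype.card_subtype]
  rfl

lemma numOccs_eq_occupancy_add (F : Fin m → Fin 3 → Fin n × Bool) (v : Fin n) :
    numOccs F v =
      occupancy (Function.uncurry F) (v, true) + occupancy (Function.uncurry F) (v, false) := by
  rw [numOccs, Nat.card_eq_fintype_card, Fintype.card_subtype, occupancy, occupancy,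
    ← card_union_of_disjoint (disjoint_filter.2 fun ij _ h ↦ by simp [h]), ← filter_or]
  congr! with ij
  rcases h : F ij.1 ij.2 with ⟨w, _ | _⟩ <;> simp [Function.uncurry, h]

lemma omegaProp_eq_frequency {x p : ℕ} (hpx : p ≤ x) (F : Fin m → Fin 3 → Fin n × Bool) :
    omegaProp n m x p F =
      (#{v | Function.curry (occupancy (Function.uncurry F)) v = signCounts x p} : ℝ) / n := by
  rw [omegaProp, Nat.card_eq_fintype_card, Fintype.card_subtype]
  congr! with v
  simp only [numOccs_eq_occupancy_add, numPosOccs_eq_occupancy, funext_iff, Bool.forall_bool,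
    Function.curry, signCounts]
  grind

lemma occupancy_mem_atypicalCounts {x p : ℕ} (hpx : p ≤ x) {lam ε : ℝ}
    (F : Fin m → Fin 3 → Fin n × Bool) :
    occupancy (Function.uncurry F) ∈ atypicalCounts (Fin n) lam x p ε ↔
      ε ≤ |omegaProp n m x p F - kappa lam x p| := by
  rw [omegaProp_eq_frequency hpx, atypicalCounts, Set.mem_ofPred_eq, Fintype.card_fin]

lemma card_abs_omegaProp_sub_kappa_ge {x p : ℕ} (hpx : p ≤ x) (lam ε : ℝ) :
    Nat.card {F : Fin m → Fin 3 → Fin n × Bool // ε ≤ |omegaProp n m x p F - kappa lam x p|} =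
      Nat.card {G : Fin m × Fin 3 → Fin n × Bool //
        occupancy G ∈ atypicalCounts (Fin n) lam x p ε} :=
  Nat.card_congr <| (Equiv.curry _ _ _).symm.subtypeEquiv fun F ↦
    (occupancy_mem_atypicalCounts hpx F).symm

lemma pi_poissonMeasure_real_signCounts (r : ℝ≥0) {x p : ℕ} (hpx : p ≤ x) :
    (Measure.pi fun _ : Bool ↦ poissonMeasure r).real {signCounts x p} = kappa (2 * r) x p := by
  rw [pi_poissonMeasure_real_singleton, kappa, Nat.cast_choose ℝ hpx, Real.rpow_neg zero_le_two,
    Real.rpow_natCast, mul_pow]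
  simp only [Fintype.card_bool, Nat.cast_ofNat, Fintype.sum_bool, Fintype.prod_bool, signCounts,
    if_true, if_false, Bool.false_eq_true, Nat.add_sub_cancel' hpx]
  field_simp

lemma pi_poissonMeasure_real_atypicalCounts_le {V : Type*} [Fintype V] [Nonempty V]
    (r : ℝ≥0) {x p : ℕ} (hpx : p ≤ x) {ε : ℝ} (hε : 0 ≤ ε) :
    (Measure.pi fun _ : V × Bool ↦ poissonMeasure r).real (atypicalCounts V (2 * r) x p ε) ≤
      2 * Real.exp (-2 * ε ^ 2 * Fintype.card V) := by
  have hcurry := measurePreserving_curry_pi fun (_ : V) (_ : Bool) ↦ poissonMeasure r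
  have hHoeffding := pi_abs_frequency_sub_ge_le (V := V)
    (Measure.pi fun _ : Bool ↦ poissonMeasure r) (measurableSet_singleton (signCounts x p)) hε
  rwa [pi_poissonMeasure_real_signCounts r hpx, measureReal_def,
    ← hcurry.measure_preimage_equiv] at hHoeffding

theorem omega_concentration_exponential_general {c : ℝ} (hc : 0 < c) {x p : ℕ} (hpx : p ≤ x)
    {ε : ℝ} (hε : 0 ≤ ε) {n m : ℕ} (hn : 0 < n) (hm : (m : ℝ) = c * n) :
    (Nat.card {F : Fin m → Fin 3 → Fin n × Bool //
        ε ≤ |omegaProp n m x p F - kappa (3 * c) x p|} : ℝ) / (2 * (n : ℝ)) ^ (3 * m) ≤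
      2 * Real.exp 1 * √(3 * c) * √n * Real.exp (-(2 * ε ^ 2) * n) := by
  have hm0 : 0 < m := by
    rify
    rw [hm]
    positivity
  have : NeZero n := ⟨hn.ne'⟩
  have : NeZero m := ⟨hm0.ne'⟩
  let r : ℝ≥0 := ⟨3 * c / 2, by positivity⟩
  have hr : 2 * (r : ℝ) = 3 * c := mul_div_cancel₀ _ two_ne_zero
  have hliterals : (Fintype.card (Fin m × Fin 3) : ℝ) = 3 * c * n := by
    rw [Fintype.card_prod, Fintype.card_fin, Fintype.card_fin]
    push_cast
    linear_combination 3 * hm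
  have hrate : r * Fintype.card (Fin n × Bool) = (Fintype.card (Fin m × Fin 3) : ℝ) := by
    rw [hliterals, ← hr, Fintype.card_prod, Fintype.card_fin, Fintype.card_bool]
    push_cast
    ring
  calc _ = (Nat.card {G : Fin m × Fin 3 → Fin n × Bool //
            occupancy G ∈ atypicalCounts (Fin n) (2 * r) x p ε} : ℝ) /
          Fintype.card (Fin n × Bool) ^ Fintype.card (Fin m × Fin 3) := by
        rw [hr, card_abs_omegaProp_sub_kappa_ge hpx]
        simp [mul_comm]
    _ ≤ Real.exp 1 * √(Fintype.card (Fin m × Fin 3)) *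
          (Measure.pi fun _ ↦ poissonMeasure r).real (atypicalCounts (Fin n) (2 * r) x p ε) :=
        card_occupancy_mem_div_le hrate _
    _ ≤ Real.exp 1 * √(Fintype.card (Fin m × Fin 3)) *
          (2 * Real.exp (-2 * ε ^ 2 * Fintype.card (Fin n))) := by
        gcongr
        exact pi_poissonMeasure_real_atypicalCounts_le r hpx hε
    _ = _ := by
        rw [hliterals, Real.sqrt_mul (by positivity), Fintype.card_fin]
        ring_nf

end Formula

lemma natCast_toNat_num_of_den_eq_one {q : ℚ} (hq : 0 ≤ q) (hden : q.den = 1) :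
    (q.num.toNat : ℚ) = q := by
  rw [← Int.cast_natCast, Int.toNat_of_nonneg (Rat.num_nonneg.2 hq),
    Rat.coe_int_num_of_den_eq_one hden]

/-- exponential concentration of the signed occurrence profile.  For a
positive rational `c`, `λ = 3c`, fixed `0 ≤ p ≤ x` and `ε > 0`, there are `C > 0` and
`δ > 0` such that for every positive integer `n` with `c·n ∈ ℕ`, the probability that a
uniformly random formula with `c·n` clauses on `n` variables has
`|ω_{x,p} − κ_{x,p}| ≥ ε` is at most `C √n e^{−δ n}`. -/
theorem omega_concentration_exponential (c : ℚ) (hc : 0 < c) (x p : ℕ) (hpx : p ≤ x)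
    (ε : ℝ) (hε : 0 < ε) :
    ∃ C > (0 : ℝ), ∃ δ > (0 : ℝ), ∀ n : ℕ, 0 < n → (c * (n : ℚ)).den = 1 →
      (Nat.card {F : Fin ((c * (n : ℚ)).num.toNat) → Fin 3 → Fin n × Bool //
          ε ≤ |omegaProp n ((c * (n : ℚ)).num.toNat) x p F - kappa (3 * (c : ℝ)) x p|} : ℝ) /
        ((2 * (n : ℝ)) ^ (3 * (c * (n : ℚ)).num.toNat))
      ≤ C * Real.sqrt n * Real.exp (-δ * n) := by
  have hc' : (0 : ℝ) < c := Rat.cast_pos.2 hc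
  exact ⟨2 * Real.exp 1 * √(3 * c), by positivity, 2 * ε ^ 2, by positivity, fun n hn hden ↦
    omega_concentration_exponential_general hc' hpx hε.le hn <|
      mod_cast natCast_toNat_num_of_den_eq_one (by positivity) hden⟩
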